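/- For all x ∈ ℝ⁸ with ‖x‖ ≥ √2, the function a admits the representation a(x) = −4 sin²(π‖x‖²/2) ∫₀^{i∞} φ₀(−1/z) z² e^{πi‖x‖²z} dz, where the integral is taken along the positive imaginary axis. In particular a(x) has (at least) a double zero at every x with ‖x‖² an even positive integer. -/

import Mathlib

/-!
With `r = ‖x‖²`, `φS z = φ₀(-1/z) z²` and `G r z = φS z · e^{πirz}`, every contour but the last is,
after a translation by `0` or `±1`, a contour for `G r`; the translation contributes the factor
`e^{∓πir}`.

The modular transformations of `E₂, E₄, E₆` make `φS` a quadratic polynomial in `z` with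
`1`-periodic coefficients and leading coefficient `φ₀` (`φS_eq`). Its second difference is therefore
`φS(z+1) + φS(z-1) - 2 φS(z) = 2 φ₀(z)` (`φS_second_diff`). Cauchy's theorem on the rectangles with
corners `i` and `±1 + iT` (`cauchy_G`) replaces the horizontal segments at height `1` by vertical
ones and by horizontal segments at height `T`. By the second difference identity the vertical
sides combine into `2φ₀`, which cancels the last contour up to height `T`. What remains
(`funA_truncated`) is `(e^{πir} + e^{-πir} - 2) ∫₀^{iT} G`, where the factor is `-4 sin²(πr/2)`,
together with the horizontal segments at height `T` and a tail of `∫ φ₀ e^{πirz}`.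

As `T → ∞`, the `q`-expansions give `φS ~ -(36/π²) q⁻¹` in the strip `|Re z| ≤ 1`
(`tendsto_nome_mul_φS`). For `r > 2` the integrand `G r` thus decays and the error terms vanish.
For `r = 2` it tends to a nonzero constant `c`; the horizontal segments still cancel in the limit
since both exponential factors are `1`, and the divergent ray integral has coefficient zero.
-/

open Complex

/-- The normalized weight-2 Eisenstein series `E₂` on the upper half-plane (constant term 1),
given by its `q`-expansion `1 - 24 ∑ σ₁(n) qⁿ`, extended by the same formula to all of `ℂ`. -/
noncomputable def E₂ (z : ℂ) : ℂ :=
  1 - 24 * ∑' n : ℕ+, (ArithmeticFunction.sigma 1 (n : ℕ) : ℂ) *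
    Complex.exp (2 * Real.pi * I * (n : ℕ) * z)

/-- The normalized weight-4 Eisenstein series `E₄` (constant term 1),
given by its `q`-expansion `1 + 240 ∑ σ₃(n) qⁿ`. -/
noncomputable def E₄ (z : ℂ) : ℂ :=
  1 + 240 * ∑' n : ℕ+, (ArithmeticFunction.sigma 3 (n : ℕ) : ℂ) *
    Complex.exp (2 * Real.pi * I * (n : ℕ) * z)

/-- The normalized weight-6 Eisenstein series `E₆` (constant term 1),
given by its `q`-expansion `1 - 504 ∑ σ₅(n) qⁿ`. -/
noncomputable def E₆ (z : ℂ) : ℂ :=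
  1 - 504 * ∑' n : ℕ+, (ArithmeticFunction.sigma 5 (n : ℕ) : ℂ) *
    Complex.exp (2 * Real.pi * I * (n : ℕ) * z)

/-- The modular discriminant `Δ = (E₄³ - E₆²) / 1728`. -/
noncomputable def Δ (z : ℂ) : ℂ := (E₄ z ^ 3 - E₆ z ^ 2) / 1728

/-- Viazovska's weakly holomorphic quasimodular form `φ₀ = (E₂E₄ - E₆)² / Δ`. -/
noncomputable def φ₀ (z : ℂ) : ℂ := (E₂ z * E₄ z - E₆ z) ^ 2 / Δ z

/-- The Jacobi theta-nullwert `θ₀₀(z) = ∑_{n ∈ ℤ} e^{πin²z}`. -/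
noncomputable def θ₀₀ (z : ℂ) : ℂ := ∑' n : ℤ, Complex.exp (Real.pi * I * (n : ℂ) ^ 2 * z)

/-- The Jacobi theta-nullwert `θ₀₁(z) = ∑_{n ∈ ℤ} (-1)ⁿ e^{πin²z}`. -/
noncomputable def θ₀₁ (z : ℂ) : ℂ :=
  ∑' n : ℤ, (-1 : ℂ) ^ n * Complex.exp (Real.pi * I * (n : ℂ) ^ 2 * z)

/-- The Jacobi theta-nullwert `θ₁₀(z) = ∑_{n ∈ ℤ} e^{πi(n+1/2)²z}`. -/
noncomputable def θ₁₀ (z : ℂ) : ℂ :=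
  ∑' n : ℤ, Complex.exp (Real.pi * I * ((n : ℂ) + 1 / 2) ^ 2 * z)

/-- Viazovska's modular form
`ψ_S = 128((θ₀₁⁴ - θ₁₀⁴)/θ₀₀⁸ - (θ₁₀⁴ + θ₀₀⁴)/θ₀₁⁸)`. -/
noncomputable def ψS (z : ℂ) : ℂ :=
  128 * ((θ₀₁ z ^ 4 - θ₁₀ z ^ 4) / θ₀₀ z ^ 8 - (θ₁₀ z ^ 4 + θ₀₀ z ^ 4) / θ₀₁ z ^ 8)

open scoped Real

/-- The complex line integral of `f` along the straight segment from `w₁` to `w₂`. -/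
noncomputable def segInt (f : ℂ → ℂ) (w₁ w₂ : ℂ) : ℂ :=
  (w₂ - w₁) * ∫ t in (0 : ℝ)..1, f (w₁ + (t : ℂ) * (w₂ - w₁))

/-- The complex line integral of `f` along the vertical ray on the imaginary axis
from `c * i` to `i∞`, parametrized as `t ↦ t * i`. -/
noncomputable def imAxisRayInt (f : ℂ → ℂ) (c : ℝ) : ℂ :=
  ∫ t in Set.Ioi c, f ((t : ℂ) * I) * I

/-- The Gaussian kernel `e^{πi‖x‖²z}` appearing in the integrands. -/
noncomputable def ker (x : EuclideanSpace ℝ (Fin 8)) (z : ℂ) : ℂ :=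
  Complex.exp (Real.pi * I * (‖x‖ : ℂ) ^ 2 * z)

/-- Viazovska's function `a : ℝ⁸ → ℂ`, defined by contour integrals of `φ₀`:
the first contour runs from `-1` vertically to `-1 + i` then horizontally to `i`, the second
from `1` vertically to `1 + i` then horizontally to `i`, the third along the imaginary axis
from `0` to `i`, and the fourth along the imaginary axis from `i` to `i∞`. -/
noncomputable def funA (x : EuclideanSpace ℝ (Fin 8)) : ℂ :=
  (segInt (fun z => φ₀ (-1 / (z + 1)) * (z + 1) ^ 2 * ker x z) (-1) (-1 + I) +
    segInt (fun z => φ₀ (-1 / (z + 1)) * (z + 1) ^ 2 * ker x z) (-1 + I) I) +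
  (segInt (fun z => φ₀ (-1 / (z - 1)) * (z - 1) ^ 2 * ker x z) 1 (1 + I) +
    segInt (fun z => φ₀ (-1 / (z - 1)) * (z - 1) ^ 2 * ker x z) (1 + I) I) -
  2 * segInt (fun z => φ₀ (-1 / z) * z ^ 2 * ker x z) 0 I +
  2 * imAxisRayInt (fun z => φ₀ z * ker x z) 1

/-- Viazovska's function `b : ℝ⁸ → ℂ`, defined by contour integrals of `ψ_S` along the same
contours as `funA`, with a minus sign on the ray from `i` to `i∞`. -/
noncomputable def funB (x : EuclideanSpace ℝ (Fin 8)) : ℂ :=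
  (segInt (fun z => ψS (-1 / (z + 1)) * (z + 1) ^ 2 * ker x z) (-1) (-1 + I) +
    segInt (fun z => ψS (-1 / (z + 1)) * (z + 1) ^ 2 * ker x z) (-1 + I) I) +
  (segInt (fun z => ψS (-1 / (z - 1)) * (z - 1) ^ 2 * ker x z) 1 (1 + I) +
    segInt (fun z => ψS (-1 / (z - 1)) * (z - 1) ^ 2 * ker x z) (1 + I) I) -
  2 * segInt (fun z => ψS (-1 / z) * z ^ 2 * ker x z) 0 I -
  2 * imAxisRayInt (fun z => ψS z * ker x z) 1

section

open scoped MatrixGroups ModularForm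

/-! ### Comparison with Mathlib's Eisenstein series -/

/-- The Lambert-type series of the definitions, as a power series in `e^{2πiz}`. -/
lemma qser_eq (k : ℕ) (z : ℂ) :
    (∑' n : ℕ+, (ArithmeticFunction.sigma k (n : ℕ) : ℂ) *
      Complex.exp (2 * Real.pi * I * (n : ℕ) * z)) =
    ∑' n : ℕ+, (ArithmeticFunction.sigma k (n : ℕ) : ℂ) *
      Complex.exp (2 * Real.pi * I * z) ^ (n : ℕ) := by
  refine tsum_congr fun n => ?_
  rw [← Complex.exp_nat_mul]
  ring_nf

lemma E₂_coe (z : UpperHalfPlane) : E₂ z = EisensteinSeries.E2 z := by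
  rw [EisensteinSeries.E2_eq_tsum_cexp, E₂, qser_eq]

lemma bernoulli_four : bernoulli 4 = -1 / 30 := by
  simp [bernoulli, bernoulli'_four]; norm_num

lemma bernoulli'_five_six : bernoulli' 5 = 0 ∧ bernoulli' 6 = 1 / 42 := by
  have h5 : bernoulli' 5 = 0 := by
    rw [bernoulli'_def]
    norm_num [Finset.sum_range_succ, Nat.choose, bernoulli'_four, bernoulli'_three]
  refine ⟨h5, ?_⟩
  rw [bernoulli'_def]
  norm_num [Finset.sum_range_succ, Nat.choose, bernoulli'_four, bernoulli'_three, h5]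

lemma bernoulli_six : bernoulli 6 = 1 / 42 := by
  norm_num [bernoulli, bernoulli'_five_six.2]

lemma E₄_coe (z : UpperHalfPlane) : E₄ z = ModularForm.E₄ z := by
  rw [ModularForm.E₄, EisensteinSeries.q_expansion_bernoulli _ (by decide), E₄, qser_eq,
    bernoulli_four]
  simp only [zpow_natCast]
  norm_num

lemma E₆_coe (z : UpperHalfPlane) : E₆ z = ModularForm.E₆ z := by
  rw [ModularForm.E₆, EisensteinSeries.q_expansion_bernoulli _ (by decide), E₆, qser_eq,
    bernoulli_six]
  simp only [zpow_natCast]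
  norm_num

lemma Δ_coe (z : UpperHalfPlane) : Δ z = ModularForm.discriminant z := by
  rw [ModularForm.discriminant_eq_E₄_cube_sub_E₆_sq, Δ, E₄_coe, E₆_coe]

lemma Δ_ne_zero {z : ℂ} (hz : 0 < z.im) : Δ z ≠ 0 := by
  have := Δ_coe ⟨z, hz⟩
  dsimp only at this
  rw [this]
  exact ModularForm.discriminant_ne_zero _

/-! ### Holomorphy and the modular transformations -/

lemma holo_of_coe {f : ℂ → ℂ} {F : UpperHalfPlane → ℂ} (h : ∀ z : UpperHalfPlane, f z = F z)
    (hF : MDifferentiable (modelWithCornersSelf ℂ ℂ) (modelWithCornersSelf ℂ ℂ) F) :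
    DifferentiableOn ℂ f {z | 0 < z.im} := by
  rw [UpperHalfPlane.mdifferentiable_iff] at hF
  refine hF.congr fun z hz => ?_
  simp only [Function.comp, UpperHalfPlane.ofComplex_apply_of_im_pos hz]
  exact h ⟨z, hz⟩

lemma E₂_holo : DifferentiableOn ℂ E₂ {z | 0 < z.im} := holo_of_coe E₂_coe E2_mdifferentiable
lemma E₄_holo : DifferentiableOn ℂ E₄ {z | 0 < z.im} :=
  holo_of_coe E₄_coe (ModularFormClass.holo ModularForm.E₄)
lemma E₆_holo : DifferentiableOn ℂ E₆ {z | 0 < z.im} :=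
  holo_of_coe E₆_coe (ModularFormClass.holo ModularForm.E₆)

lemma φ₀_holo : DifferentiableOn ℂ φ₀ {z | 0 < z.im} :=
  (((E₂_holo.mul E₄_holo).sub E₆_holo).pow 2).div
    (((E₄_holo.pow 3).sub (E₆_holo.pow 2)).div_const _) fun _ hz => Δ_ne_zero hz

lemma E₂_S {z : ℂ} (hz : 0 < z.im) : E₂ (-1 / z) = z ^ 2 * E₂ z - 6 * I / Real.pi * z := by
  have hz0 : z ≠ 0 := by rintro rfl; simp at hz
  have hE2 := congrFun (EisensteinSeries.E2_slash_action ModularGroup.S) ⟨z, hz⟩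
  have h1 := E₂_coe (.mk _ (UpperHalfPlane.im_inv_neg_coe_pos ⟨z, hz⟩))
  have h2 := E₂_coe ⟨z, hz⟩
  dsimp only at h1 h2
  rw [SlashInvariantForm.slash_S_apply, Pi.sub_apply,
    Pi.smul_apply, EisensteinSeries.D2_S, riemannZeta_two, ← h1, ← h2] at hE2
  simp only [smul_eq_mul] at hE2
  have hpi : (Real.pi : ℂ) ≠ 0 := by exact_mod_cast Real.pi_ne_zero
  rw [show -1 / z = (-z)⁻¹ by field_simp]
  have h3 : E₂ (-z)⁻¹ = z ^ 2 * (E₂ (-z)⁻¹ * z ^ (-2 : ℤ)) := by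
    rw [zpow_neg]; norm_cast; field_simp
  rw [h3, hE2]
  field_simp
  try ring_nf

lemma S_of_modularForm {k : ℕ} {f : ℂ → ℂ} (F : ModularForm 𝒮ℒ k)
    (h : ∀ z : UpperHalfPlane, f z = F z)
    {z : ℂ} (hz : 0 < z.im) : f (-1 / z) = z ^ k * f z := by
  have hz0 : z ≠ 0 := by rintro rfl; simp at hz
  have hE : ((F : UpperHalfPlane → ℂ) ∣[(k : ℤ)] ModularGroup.S) ⟨z, hz⟩ = F ⟨z, hz⟩ :=
    congrFun (SlashInvariantForm.slash_action_eqn F _ ⟨ModularGroup.S, rfl⟩) _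
  have h1 := h (.mk _ (UpperHalfPlane.im_inv_neg_coe_pos ⟨z, hz⟩))
  have h2 := h ⟨z, hz⟩
  dsimp only at h1 h2
  rw [SlashInvariantForm.slash_S_apply, ← h1, ← h2, zpow_neg, zpow_natCast] at hE
  rw [show -1 / z = (-z)⁻¹ by field_simp, ← hE]
  field_simp

lemma E₄_S {z : ℂ} (hz : 0 < z.im) : E₄ (-1 / z) = z ^ 4 * E₄ z :=
  S_of_modularForm ModularForm.E₄ E₄_coe hz
lemma E₆_S {z : ℂ} (hz : 0 < z.im) : E₆ (-1 / z) = z ^ 6 * E₆ z :=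
  S_of_modularForm ModularForm.E₆ E₆_coe hz

/-! ### The inverted form `φ₀(-1/z) z²` -/

/-- The weight `-2` companion `(E₂E₄ - E₆)E₄ / Δ` of `φ₀`. -/
noncomputable def φm2 (z : ℂ) : ℂ := (E₂ z * E₄ z - E₆ z) * E₄ z / Δ z

/-- The weight `-4` companion `E₄² / Δ` of `φ₀`. -/
noncomputable def φm4 (z : ℂ) : ℂ := E₄ z ^ 2 / Δ z

/-- The function `φ₀(-1/z) z²` occurring in all contour integrals. -/
noncomputable def φS (z : ℂ) : ℂ := φ₀ (-1 / z) * z ^ 2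

lemma qterm_add_one (n : ℕ+) (z : ℂ) : Complex.exp (2 * Real.pi * I * (n : ℕ) * (z + 1)) =
    Complex.exp (2 * Real.pi * I * (n : ℕ) * z) := by
  rw [show 2 * Real.pi * I * (n : ℕ) * (z + 1) =
    2 * Real.pi * I * (n : ℕ) * z + (n : ℕ) * (2 * Real.pi * I) by ring, Complex.exp_add,
    Complex.exp_nat_mul_two_pi_mul_I, mul_one]

lemma E₂_add_one (z : ℂ) : E₂ (z + 1) = E₂ z := by simp only [E₂, qterm_add_one]
lemma E₄_add_one (z : ℂ) : E₄ (z + 1) = E₄ z := by simp only [E₄, qterm_add_one]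
lemma E₆_add_one (z : ℂ) : E₆ (z + 1) = E₆ z := by simp only [E₆, qterm_add_one]

/-- The quasimodular transformation of `φ₀` under `S`: since `E₂` picks up a linear term, the
square in `φ₀` makes `φ₀(-1/z) z²` a quadratic polynomial in `z` with `1`-periodic coefficients. -/
lemma φS_eq {z : ℂ} (hz : 0 < z.im) :
    φS z = φ₀ z * z ^ 2 - 12 * I / Real.pi * φm2 z * z - 36 / Real.pi ^ 2 * φm4 z := by
  have hz0 : z ≠ 0 := by rintro rfl; simp at hz
  have hpi : (Real.pi : ℂ) ≠ 0 := by exact_mod_cast Real.pi_ne_zero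
  have hΔ := Δ_ne_zero hz
  have hΔS : Δ (-1 / z) = z ^ 12 * Δ z := by
    simp only [Δ, E₄_S hz, E₆_S hz]; ring
  have hN : E₂ (-1 / z) * E₄ (-1 / z) - E₆ (-1 / z) =
      z ^ 5 * (z * (E₂ z * E₄ z - E₆ z) - 6 * I / Real.pi * E₄ z) := by
    rw [E₂_S hz, E₄_S hz, E₆_S hz]; ring
  rw [φS, φ₀, hN, hΔS, φ₀, φm2, φm4]
  have hI : I ^ 2 = -1 := I_sq
  field_simp
  linear_combination (36 * E₄ z ^ 2) * hI

/-- The second difference of the quadratic polynomial in `φS_eq`. -/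
lemma φS_second_diff {z : ℂ} (hz : 0 < z.im) :
    φS (z + 1) + φS (z - 1) - 2 * φS z = 2 * φ₀ z := by
  have h1 : 0 < (z + 1).im := by simpa using hz
  have h2 : 0 < (z - 1).im := by simpa using hz
  have a0 : φ₀ (z + 1) = φ₀ z := by simp only [φ₀, Δ, E₂_add_one, E₄_add_one, E₆_add_one]
  have a2 : φm2 (z + 1) = φm2 z := by simp only [φm2, Δ, E₂_add_one, E₄_add_one, E₆_add_one]
  have a4 : φm4 (z + 1) = φm4 z := by simp only [φm4, Δ, E₄_add_one, E₆_add_one]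
  have b (f : ℂ → ℂ) (hf : ∀ w, f (w + 1) = f w) : f (z - 1) = f z := by
    rw [← hf (z - 1), sub_add_cancel]
  have b0 : φ₀ (z - 1) = φ₀ z := b _ fun w => by
    simp only [φ₀, Δ, E₂_add_one, E₄_add_one, E₆_add_one]
  have b2 : φm2 (z - 1) = φm2 z := b _ fun w => by
    simp only [φm2, Δ, E₂_add_one, E₄_add_one, E₆_add_one]
  have b4 : φm4 (z - 1) = φm4 z := b _ fun w => by
    simp only [φm4, Δ, E₄_add_one, E₆_add_one]
  rw [φS_eq h1, φS_eq h2, φS_eq hz, a0, a2, a4, b0, b2, b4]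
  ring

lemma im_neg_one_div_pos {z : ℂ} (hz : 0 < z.im) : 0 < (-1 / z).im := by
  have := UpperHalfPlane.im_inv_neg_coe_pos ⟨z, hz⟩
  have hz0 : z ≠ 0 := by rintro rfl; simp at hz
  rwa [show -1 / z = (-z)⁻¹ by field_simp]

lemma φS_holo : DifferentiableOn ℂ φS {z | 0 < z.im} := by
  refine DifferentiableOn.mul ?_ (by fun_prop)
  refine φ₀_holo.comp (t := {z : ℂ | 0 < z.im}) ?_ fun z hz => im_neg_one_div_pos hz
  refine (differentiableOn_const _).div differentiableOn_id fun z hz => ?_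
  rintro rfl
  simp at hz

/-! ### Behaviour at the cusp -/

open Filter Topology

/-- Neighbourhoods of `i∞`. -/
def cusp : Filter ℂ := comap Complex.im atTop

/-- Neighbourhoods of `i∞` inside the vertical strip `|Re z| ≤ 1`. -/
def stripCusp : Filter ℂ := cusp ⊓ 𝓟 {z | |z.re| ≤ 1}

/-- The nome `q = e^{2πiz}`. -/
noncomputable def nome (z : ℂ) : ℂ := Complex.exp (2 * Real.pi * I * z)

lemma norm_nome (z : ℂ) : ‖nome z‖ = Real.exp (-(2 * Real.pi) * z.im) := by
  rw [nome, Complex.norm_exp]; simp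

lemma nome_ne_zero (z : ℂ) : nome z ≠ 0 := Complex.exp_ne_zero _

lemma eventually_im (c : ℝ) : ∀ᶠ z in cusp, c ≤ z.im :=
  tendsto_comap.eventually (eventually_ge_atTop c)

lemma tendsto_nome : Tendsto nome cusp (𝓝 0) := by
  rw [tendsto_zero_iff_norm_tendsto_zero]
  simp only [norm_nome]
  exact (Real.tendsto_exp_atBot.comp (tendsto_id.const_mul_atTop_of_neg
    (by linarith [Real.pi_pos]))).comp tendsto_comap

/-- `∑ σ_k(n) qⁿ ~ q` at the cusp. -/
lemma tendsto_qser (k : ℕ) : Tendsto (fun z => (∑' n : ℕ+,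
    (ArithmeticFunction.sigma k (n : ℕ) : ℂ) * Complex.exp (2 * Real.pi * I * (n : ℕ) * z)) / nome z)
    cusp (𝓝 1) := by
  have hs : Summable fun n : ℕ+ =>
      (ArithmeticFunction.sigma k (n : ℕ) : ℝ) * Real.exp (-(2 * Real.pi) * ((n : ℕ) - 1)) := by
    have h := (EisensteinSeries.summable_sigma_mul_cexp_pow (k := k + 1) (by omega)
      UpperHalfPlane.I).norm
    have h' := (h.comp_injective PNat.coe_injective).mul_right (Real.exp (2 * Real.pi))
    refine h'.congr fun n => ?_
    simp only [Function.comp, norm_mul, Complex.norm_natCast, norm_pow, Nat.add_sub_cancel]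
    have := norm_nome I
    rw [nome] at this
    rw [UpperHalfPlane.coe_I, this, mul_assoc, ← Real.exp_nat_mul, ← Real.exp_add]
    simp only [I_im]
    ring_nf
  have key : Tendsto (fun z => ∑' n : ℕ+, (ArithmeticFunction.sigma k (n : ℕ) : ℂ) *
      nome z ^ ((n : ℕ) - 1)) cusp (𝓝 (∑' n : ℕ+, if n = 1 then 1 else 0)) := by
    refine tendsto_tsum_of_dominated_convergence hs (fun n => ?_) ?_
    · split_ifs with hn
      · subst hn; simpa using tendsto_const_nhds
      · have hn' : (n : ℕ) - 1 ≠ 0 := by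
          have := n.pos
          have : (n : ℕ) ≠ 1 := by simpa using hn
          omega
        simpa [hn'] using (tendsto_nome.pow ((n : ℕ) - 1)).const_mul
          (ArithmeticFunction.sigma k (n : ℕ) : ℂ)
    · filter_upwards [eventually_im 1] with z hz n
      rw [norm_mul, Complex.norm_natCast, norm_pow, norm_nome, ← Real.exp_nat_mul, Nat.cast_pred n.pos]
      refine mul_le_mul_of_nonneg_left (Real.exp_le_exp.2 ?_) (Nat.cast_nonneg _)
      have : (0 : ℝ) ≤ (n : ℕ) - 1 := by
        have : (1 : ℝ) ≤ (n : ℕ) := by exact_mod_cast n.pos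
        linarith
      nlinarith [mul_nonneg (mul_nonneg Real.pi_pos.le this) (sub_nonneg.2 hz)]
  rw [tsum_ite_eq] at key
  refine key.congr fun z => ?_
  rw [eq_div_iff (nome_ne_zero z), ← tsum_mul_right]
  refine tsum_congr fun n => ?_
  rw [mul_assoc, ← pow_succ, Nat.sub_add_cancel n.pos, nome, ← Complex.exp_nat_mul]
  ring_nf

lemma exists_expansion : ∃ A₁ A₃ A₅ : ℂ → ℂ, Tendsto A₁ cusp (𝓝 1) ∧ Tendsto A₃ cusp (𝓝 1) ∧
    Tendsto A₅ cusp (𝓝 1) ∧ (∀ z, E₂ z = 1 - 24 * (nome z * A₁ z)) ∧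
    (∀ z, E₄ z = 1 + 240 * (nome z * A₃ z)) ∧ (∀ z, E₆ z = 1 - 504 * (nome z * A₅ z)) := by
  refine ⟨_, _, _, tendsto_qser 1, tendsto_qser 3, tendsto_qser 5, fun z => ?_, fun z => ?_,
    fun z => ?_⟩ <;> rw [mul_div_cancel₀ _ (nome_ne_zero z)] <;> rfl

lemma tendsto_E₄ : Tendsto E₄ cusp (𝓝 1) := by
  obtain ⟨A₁, A₃, A₅, h1, h3, h5, e2, e4, e6⟩ := exists_expansion
  rw [show E₄ = _ from funext e4]
  simpa using ((tendsto_nome.mul h3).const_mul 240).const_add 1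

lemma tendsto_Δ : Tendsto (fun z => Δ z / nome z) cusp (𝓝 1) := by
  obtain ⟨A₁, A₃, A₅, h1, h3, h5, e2, e4, e6⟩ := exists_expansion
  have hc : Continuous fun p : ℂ × ℂ × ℂ => (720 * p.2.1 + 3 * 240 ^ 2 * p.1 * p.2.1 ^ 2 +
    240 ^ 3 * p.1 ^ 2 * p.2.1 ^ 3 + 1008 * p.2.2 - 504 ^ 2 * p.1 * p.2.2 ^ 2) / 1728 := by
    fun_prop
  have := (hc.tendsto (0, 1, 1)).comp (tendsto_nome.prodMk_nhds (h3.prodMk_nhds h5))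
  norm_num at this
  refine this.congr fun z => ?_
  have := nome_ne_zero z
  simp only [Function.comp, Δ, e4, e6]
  field_simp
  ring

lemma tendsto_num : Tendsto (fun z => (E₂ z * E₄ z - E₆ z) / nome z) cusp (𝓝 720) := by
  obtain ⟨A₁, A₃, A₅, h1, h3, h5, e2, e4, e6⟩ := exists_expansion
  have hc : Continuous fun p : ℂ × ℂ × ℂ × ℂ => 240 * p.2.2.1 - 24 * p.2.1 + 504 * p.2.2.2 -
    24 * 240 * p.1 * p.2.1 * p.2.2.1 := by
    fun_prop
  have := (hc.tendsto (0, 1, 1, 1)).comp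
    (tendsto_nome.prodMk_nhds (h1.prodMk_nhds (h3.prodMk_nhds h5)))
  norm_num at this
  refine this.congr fun z => ?_
  have := nome_ne_zero z
  simp only [Function.comp, e2, e4, e6]
  field_simp
  ring

lemma tendsto_φ₀ : Tendsto φ₀ cusp (𝓝 0) := by
  have := (tendsto_nome.mul (tendsto_num.pow 2)).div tendsto_Δ one_ne_zero
  rw [zero_mul, zero_div] at this
  refine this.congr fun z => ?_
  have := nome_ne_zero z
  simp only [Pi.div_apply, φ₀]
  field_simp

lemma tendsto_nome_mul : Tendsto (fun z => nome z * z) stripCusp (𝓝 0) := by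
  have h1 : Tendsto (fun y : ℝ => Real.exp (-(2 * Real.pi) * y) * (1 + y)) atTop (𝓝 0) := by
    have a := tendsto_rpow_mul_exp_neg_mul_atTop_nhds_zero 1 (2 * Real.pi) (by positivity)
    have b := tendsto_rpow_mul_exp_neg_mul_atTop_nhds_zero 0 (2 * Real.pi) (by positivity)
    have := b.add a
    simp only [Real.rpow_one, Real.rpow_zero, one_mul, add_zero] at this
    exact this.congr fun y => by ring
  rw [tendsto_zero_iff_norm_tendsto_zero]
  refine squeeze_zero' (Eventually.of_forall fun _ => norm_nonneg _) ?_
    ((h1.comp tendsto_comap).mono_left (inf_le_left : stripCusp ≤ cusp))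
  have h2 : ∀ᶠ z in stripCusp, |z.re| ≤ 1 := eventually_inf_principal.2 (Eventually.of_forall fun _ h => h)
  have h3 : ∀ᶠ z in stripCusp, 0 ≤ z.im := (eventually_im 0).filter_mono inf_le_left
  filter_upwards [h2, h3] with z hz hz'
  rw [norm_mul, norm_nome]
  simp only [Function.comp]
  gcongr
  have := Complex.norm_le_abs_re_add_abs_im z
  rw [abs_of_nonneg hz'] at this
  linarith

/-- In the strip, `φ₀(-1/z) z²` is `-36/π²` times `q⁻¹`, asymptotically. -/
lemma tendsto_nome_mul_φS :
    Tendsto (fun z => nome z * φS z) stripCusp (𝓝 (-(36 / Real.pi ^ 2))) := by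
  have hle : stripCusp ≤ cusp := inf_le_left
  have hN := tendsto_num.mono_left hle
  have hD := tendsto_Δ.mono_left hle
  have h4 := tendsto_E₄.mono_left hle
  have hq := tendsto_nome_mul
  have t0 := ((hq.pow 2).mul (hN.pow 2)).div hD one_ne_zero
  have t2 := ((hq.mul (hN.mul h4)).div hD one_ne_zero).const_mul (12 * I / Real.pi)
  have t4 := ((h4.pow 2).div hD one_ne_zero).const_mul (36 / Real.pi ^ 2 : ℂ)
  have := (t0.sub t2).sub t4
  simp only [ne_eq, OfNat.ofNat_ne_zero, not_false_eq_true, zero_pow, zero_mul,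
    mul_zero, sub_zero, one_pow, div_one, mul_one, zero_sub] at this
  refine this.congr' ?_
  filter_upwards [(eventually_im 1).filter_mono hle] with z hz
  have := nome_ne_zero z
  have hΔ := Δ_ne_zero (z := z) (by linarith)
  have hpi : (Real.pi : ℂ) ≠ 0 := by exact_mod_cast Real.pi_ne_zero
  rw [φS_eq (by linarith)]
  simp only [Pi.div_apply, φ₀, φm2, φm4]
  field_simp

/-! ### Decay and integrability of the integrand -/

/-- The integrand `φ₀(-1/z) z² e^{πirz}`, where `r` plays the role of `‖x‖²`. -/
noncomputable def G (r : ℝ) (z : ℂ) : ℂ := φS z * Complex.exp (Real.pi * I * r * z)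

lemma G_holo (r : ℝ) : DifferentiableOn ℂ (G r) {z | 0 < z.im} :=
  φS_holo.mul (by fun_prop)

lemma norm_gauss (r : ℝ) (z : ℂ) :
    ‖Complex.exp (Real.pi * I * r * z)‖ = Real.exp (-(Real.pi * r) * z.im) := by
  rw [Complex.norm_exp]; simp

lemma G_eq (r : ℝ) (z : ℂ) :
    G r z = nome z * φS z * Complex.exp (Real.pi * I * (r - 2 : ℝ) * z) := by
  rw [G, show (Real.pi * I * r * z : ℂ) = 2 * Real.pi * I * z + Real.pi * I * (r - 2 : ℝ) * z by
    push_cast; ring, Complex.exp_add, nome]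
  ring

/-- `φ₀(-1/z) z²` grows like `q⁻¹ = e^{-2πiz}`, so `r = 2` is the borderline case: the integrand
then tends to a nonzero constant, while it decays for `r > 2`. -/
lemma exists_tendsto_G {r : ℝ} (hr : 2 ≤ r) :
    ∃ c, Tendsto (G r) stripCusp (𝓝 c) ∧ (2 < r → c = 0) := by
  rcases hr.eq_or_lt with rfl | hr
  · refine ⟨_, tendsto_nome_mul_φS.congr fun z => ?_, fun h => absurd h (lt_irrefl _)⟩
    rw [G_eq]; simp
  · refine ⟨0, ?_, fun _ => rfl⟩
    have h : Tendsto (fun z => Complex.exp (Real.pi * I * (r - 2 : ℝ) * z)) stripCusp (𝓝 0) := by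
      rw [tendsto_zero_iff_norm_tendsto_zero]
      simp only [norm_gauss]
      have hneg : -(Real.pi * (r - 2)) < 0 := by
        have := mul_pos Real.pi_pos (sub_pos.2 hr)
        linarith
      exact ((Real.tendsto_exp_atBot.comp (tendsto_id.const_mul_atTop_of_neg hneg)).comp
        tendsto_comap).mono_left inf_le_left
    have := tendsto_nome_mul_φS.mul h
    rw [mul_zero] at this
    exact this.congr fun z => (G_eq r z).symm

lemma tendsto_horizontal {x : ℝ} (hx : |x| ≤ 1) :
    Tendsto (fun t : ℝ => (x : ℂ) + t * I) atTop stripCusp := by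
  refine tendsto_inf.2 ⟨tendsto_comap_iff.2 ?_, tendsto_principal.2 (Eventually.of_forall ?_)⟩
  · exact tendsto_id.congr fun t => by simp
  · intro t; simpa using hx

lemma tendsto_vertical : Tendsto (fun t : ℝ => (t : ℂ) * I) atTop stripCusp := by
  simpa using tendsto_horizontal (x := 0) (by simp)

lemma continuousOn_line {f : ℂ → ℂ} (hf : DifferentiableOn ℂ f {z | 0 < z.im}) (x : ℝ) :
    ContinuousOn (fun t : ℝ => f ((x : ℂ) + t * I)) (Set.Ioi 0) :=
  hf.continuousOn.comp (by fun_prop) fun t ht => by simpa using ht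

lemma continuousOn_vert {f : ℂ → ℂ} (hf : DifferentiableOn ℂ f {z | 0 < z.im}) :
    ContinuousOn (fun t : ℝ => f ((t : ℂ) * I)) (Set.Ioi 0) := by
  simpa using continuousOn_line hf 0

open MeasureTheory Asymptotics

lemma gauss_isBigO (r : ℝ) : (fun t : ℝ => Complex.exp (Real.pi * I * r * (t * I))) =O[atTop]
    fun t => Real.exp (-(Real.pi * r) * t) :=
  IsBigO.of_norm_eventuallyLE (Eventually.of_forall fun t => by
    simpa using (norm_gauss r (t * I)).le)

lemma integrableOn_of_isBigO_exp {f : ℂ → ℂ} (hf : DifferentiableOn ℂ f {z | 0 < z.im}) {b : ℝ}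
    (hb : 0 < b) (ho : (fun t : ℝ => f (t * I)) =O[atTop] fun t => Real.exp (-b * t)) :
    IntegrableOn (fun t : ℝ => f (t * I)) (Set.Ioi 1) := by
  have hc := (continuousOn_vert hf).mono (Set.Ici_subset_Ioi.2 one_pos)
  exact ((hc.locallyIntegrableOn measurableSet_Ici).integrableOn_of_isBigO_atTop ho
    ⟨_, Ioi_mem_atTop 1, exp_neg_integrableOn_Ioi 1 hb⟩).mono_set Set.Ioi_subset_Ici_self

lemma integrableOn_G_Ioi_one {r : ℝ} (hr : 2 < r) :
    IntegrableOn (fun t : ℝ => G r (t * I)) (Set.Ioi 1) := by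
  refine integrableOn_of_isBigO_exp (G_holo r) (mul_pos Real.pi_pos (sub_pos.2 hr)) ?_
  have h1 : (fun t : ℝ => nome (t * I) * φS (t * I)) =O[atTop] fun _ => (1 : ℝ) :=
    (tendsto_nome_mul_φS.comp tendsto_vertical).isBigO_one ℝ
  have h2 := h1.mul (gauss_isBigO (r - 2))
  simp only [← G_eq, one_mul] at h2
  exact h2

lemma tendsto_G_zero (r : ℝ) : Tendsto (fun t : ℝ => G r (t * I)) (𝓝[>] 0) (𝓝 0) := by
  have h1 : Tendsto (fun t : ℝ => -1 / ((t : ℂ) * I)) (𝓝[>] 0) cusp := by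
    refine tendsto_comap_iff.2 (tendsto_inv_nhdsGT_zero.congr fun t => ?_)
    have : -1 / ((t : ℂ) * I) = (t⁻¹ : ℝ) * I := by
      rw [neg_div, one_div, mul_inv, inv_I]; push_cast; ring
    simp [this]
  have h2 : Continuous fun t : ℝ => ((t : ℂ) * I) ^ 2 * Complex.exp (Real.pi * I * r * (t * I)) := by
    fun_prop
  have := (tendsto_φ₀.comp h1).mul ((h2.tendsto 0).mono_left nhdsWithin_le_nhds)
  rw [zero_mul] at this
  exact this.congr fun t => by simp only [G, φS, Function.comp]; ring

lemma integrableOn_G {r : ℝ} (hr : 2 < r) :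
    IntegrableOn (fun t : ℝ => G r (t * I)) (Set.Ioi 0) := by
  have hc := continuousOn_vert (G_holo r)
  refine integrableOn_Ioi_iff_integrableAtFilter_atTop_nhdsWithin.2
    ⟨⟨_, Ioi_mem_atTop 1, integrableOn_G_Ioi_one hr⟩, ?_,
      hc.locallyIntegrableOn measurableSet_Ioi⟩
  exact Measure.FiniteAtFilter.integrableAtFilter_of_tendsto
    ⟨_, self_mem_nhdsWithin, hc.aestronglyMeasurable measurableSet_Ioi⟩
    (volume.finiteAt_nhdsWithin 0 _) (tendsto_G_zero r)

/-- Local integrability at `0` holds for all `r`, in particular for `r = 2`, where the integral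
over the whole ray diverges. -/
lemma intervalIntegrable_G (r : ℝ) {T : ℝ} (hT : 0 ≤ T) :
    IntervalIntegrable (fun t : ℝ => G r (t * I)) volume 0 T := by
  have h3 : IntervalIntegrable (fun t : ℝ => G 3 (t * I)) volume 0 T :=
    (intervalIntegrable_iff_integrableOn_Ioc_of_le hT).2
      ((integrableOn_G (by norm_num)).mono_set Set.Ioc_subset_Ioi_self)
  have hc : Continuous fun t : ℝ => Complex.exp (Real.pi * I * (r - 3 : ℝ) * (t * I)) := by fun_prop
  refine (h3.mul_continuousOn hc.continuousOn).congr fun t _ => ?_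
  simp only [G, mul_assoc, ← Complex.exp_add]
  congr 2
  push_cast
  ring

lemma integrableOn_φ₀ {r : ℝ} (hr : 2 ≤ r) :
    IntegrableOn (fun t : ℝ => φ₀ (t * I) * Complex.exp (Real.pi * I * r * (t * I)))
      (Set.Ioi 1) := by
  have hd : DifferentiableOn ℂ (fun z => φ₀ z * Complex.exp (Real.pi * I * r * z))
      {z | 0 < z.im} := φ₀_holo.mul (by fun_prop)
  refine integrableOn_of_isBigO_exp hd (mul_pos Real.pi_pos (by linarith : 0 < r)) ?_
  have h1 : (fun t : ℝ => φ₀ (t * I)) =O[atTop] fun _ => (1 : ℝ) :=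
    (tendsto_φ₀.comp (tendsto_vertical.mono_right inf_le_left)).isBigO_one ℝ
  simpa using h1.mul (gauss_isBigO r)

/-! ### Shifting the contours -/

lemma tendsto_horizontal_integral {r : ℝ} {c : ℂ} (h : Tendsto (G r) stripCusp (𝓝 c)) {s : ℝ}
    (hs : |s| ≤ 1) :
    Tendsto (fun T : ℝ => ∫ x in (0 : ℝ)..s, G r (x + T * I)) atTop (𝓝 (s * c)) := by
  have hx {x : ℝ} (hx : x ∈ Set.uIoc 0 s) : |x| ≤ 1 := by
    have := Set.abs_sub_left_of_mem_uIcc (Set.uIoc_subset_uIcc hx)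
    simp only [sub_zero] at this
    exact this.trans hs
  have := intervalIntegral.tendsto_integral_filter_of_dominated_convergence
    (F := fun (T x : ℝ) => G r (x + T * I)) (f := fun _ => c) (μ := volume) (a := 0) (b := s)
    (l := atTop) (fun _ => ‖c‖ + 1) ?_ ?_ (by simp)
    (Eventually.of_forall fun x hxs => h.comp (tendsto_horizontal (hx hxs)))
  · simpa using this
  · filter_upwards [eventually_gt_atTop 0] with T hT
    have : Continuous fun x : ℝ => G r (x + T * I) :=
      (G_holo r).continuousOn.comp_continuous (by fun_prop) fun x => by simpa using hT
    exact this.aestronglyMeasurable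
  · have hb : ∀ᶠ z in stripCusp, ‖G r z‖ ≤ ‖c‖ + 1 :=
      (h.norm.eventually (gt_mem_nhds (lt_add_one _))).mono fun _ => le_of_lt
    rw [stripCusp, eventually_inf_principal, cusp, eventually_comap] at hb
    filter_upwards [hb] with T hT
    exact Eventually.of_forall fun x hxs => hT _ (by simp) (by simpa using hx hxs)

/-- Cauchy's theorem on the rectangle with corners `i` and `s + iT`. -/
lemma cauchy_G (r s : ℝ) {T : ℝ} (hT : 1 ≤ T) :
    (∫ x in (0 : ℝ)..s, G r (x + I)) = (∫ x in (0 : ℝ)..s, G r (x + T * I)) +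
      I * (∫ y in (1 : ℝ)..T, G r (y * I)) - I * ∫ y in (1 : ℝ)..T, G r (s + y * I) := by
  have := integral_boundary_rect_eq_zero_of_differentiableOn (G r) I (s + T * I)
    ((G_holo r).mono fun z hz => ?_)
  · simp at this
    linear_combination this
  · have := hz.2
    simp only [I_im, add_im, ofReal_im, mul_im, ofReal_re, mul_one, I_re, mul_zero, add_zero,
      zero_add, Set.mem_preimage, Set.uIcc_of_le hT] at this
    exact zero_lt_one.trans_le this.1

/-- `φS_second_diff` in terms of `G`: translating `G` by `±1` costs a factor `e^{±πir}`. -/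
lemma G_second_diff (r : ℝ) {z : ℂ} (hz : 0 < z.im) :
    Complex.exp (-(Real.pi * I * r)) * G r (1 + z) + Complex.exp (Real.pi * I * r) * G r (-1 + z) -
      2 * G r z = 2 * (φ₀ z * Complex.exp (Real.pi * I * r * z)) := by
  have h1 : Complex.exp (Real.pi * I * r * (1 + z)) =
      Complex.exp (Real.pi * I * r) * Complex.exp (Real.pi * I * r * z) := by
    rw [← Complex.exp_add]; ring_nf
  have h2 : Complex.exp (Real.pi * I * r * (-1 + z)) =
      Complex.exp (-(Real.pi * I * r)) * Complex.exp (Real.pi * I * r * z) := by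
    rw [← Complex.exp_add]; ring_nf
  have h3 : Complex.exp (-(Real.pi * I * r)) * Complex.exp (Real.pi * I * r) = 1 := by
    rw [← Complex.exp_add]; simp
  have h4 := φS_second_diff hz
  rw [add_comm z, show z - 1 = -1 + z by ring] at h4
  simp only [G, h1, h2]
  linear_combination Complex.exp (Real.pi * I * r * z) * h4 +
    (φS (1 + z) + φS (-1 + z)) * Complex.exp (Real.pi * I * r * z) * h3

lemma segInt_of_eq {f : ℂ → ℂ} {w₁ w₂ k : ℂ} {h : ℝ → ℂ}
    (H : ∀ t : ℝ, f (w₁ + t * (w₂ - w₁)) = k * h t) :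
    segInt f w₁ w₂ = (w₂ - w₁) * (k * ∫ t in (0 : ℝ)..1, h t) := by
  simp only [segInt, H, intervalIntegral.integral_const_mul]

/-- `a` with each contour moved by a translation onto the one for `G`. -/
lemma funA_eq (x : EuclideanSpace ℝ (Fin 8)) (r : ℝ) (hr : r = ‖x‖ ^ 2) :
    funA x = Complex.exp (-(Real.pi * I * r)) *
        (I * (∫ t in (0 : ℝ)..1, G r (t * I)) + ∫ s in (0 : ℝ)..1, G r (s + I)) +
      Complex.exp (Real.pi * I * r) *
        (I * (∫ t in (0 : ℝ)..1, G r (t * I)) + ∫ s in (0 : ℝ)..(-1), G r (s + I)) -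
      2 * (I * ∫ t in (0 : ℝ)..1, G r (t * I)) +
      2 * (I * ∫ t in Set.Ioi (1 : ℝ), φ₀ (t * I) * Complex.exp (Real.pi * I * r * (t * I))) := by
  have hker (z : ℂ) : ker x z = Complex.exp (Real.pi * I * r * z) := by
    rw [_root_.ker, hr]; push_cast; rfl
  have hm (w z : ℂ) (h : z = w - 1) : φS w * Complex.exp (Real.pi * I * r * z) =
      Complex.exp (-(Real.pi * I * r)) * G r w := by
    rw [G, mul_left_comm, ← Complex.exp_add, h]; ring_nf
  have hp (w z : ℂ) (h : z = w + 1) : φS w * Complex.exp (Real.pi * I * r * z) =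
      Complex.exp (Real.pi * I * r) * G r w := by
    rw [G, mul_left_comm, ← Complex.exp_add, h]; ring_nf
  have e1 : segInt (fun z => φ₀ (-1 / (z + 1)) * (z + 1) ^ 2 * ker x z) (-1) (-1 + I) =
      Complex.exp (-(Real.pi * I * r)) * (I * ∫ t in (0 : ℝ)..1, G r (t * I)) := by
    rw [segInt_of_eq (k := Complex.exp (-(Real.pi * I * r)))
      (h := fun t => G r (t * I)) fun t => ?_]
    · ring
    · simp only [hker]
      rw [← hm _ (-1 + t * I) (by ring), φS]
      ring_nf
  have e2 : segInt (fun z => φ₀ (-1 / (z + 1)) * (z + 1) ^ 2 * ker x z) (-1 + I) I =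
      Complex.exp (-(Real.pi * I * r)) * ∫ s in (0 : ℝ)..1, G r (s + I) := by
    rw [segInt_of_eq (k := Complex.exp (-(Real.pi * I * r)))
      (h := fun t => G r (t + I)) fun t => ?_]
    · ring
    · simp only [hker]
      rw [← hm _ (t + I - 1) (by ring), φS]
      ring_nf
  have e3 : segInt (fun z => φ₀ (-1 / (z - 1)) * (z - 1) ^ 2 * ker x z) 1 (1 + I) =
      Complex.exp (Real.pi * I * r) * (I * ∫ t in (0 : ℝ)..1, G r (t * I)) := by
    rw [segInt_of_eq (k := Complex.exp (Real.pi * I * r))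
      (h := fun t => G r (t * I)) fun t => ?_]
    · ring
    · simp only [hker]
      rw [← hp _ (1 + t * I) (by ring), φS]
      ring_nf
  have e4 : segInt (fun z => φ₀ (-1 / (z - 1)) * (z - 1) ^ 2 * ker x z) (1 + I) I =
      Complex.exp (Real.pi * I * r) * ∫ s in (0 : ℝ)..(-1), G r (s + I) := by
    have := intervalIntegral.integral_comp_neg (a := 0) (b := 1) fun s : ℝ => G r (s + I)
    rw [neg_zero] at this
    rw [intervalIntegral.integral_symm, ← this]
    rw [segInt_of_eq (k := Complex.exp (Real.pi * I * r))
      (h := fun t => G r ((-t : ℝ) + I)) fun t => ?_]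
    · ring
    · simp only [hker]
      rw [← hp _ (1 + I - t) (by push_cast; ring), φS]
      push_cast
      ring_nf
  have e5 : segInt (fun z => φ₀ (-1 / z) * z ^ 2 * ker x z) 0 I =
      I * ∫ t in (0 : ℝ)..1, G r (t * I) := by
    simp only [segInt, hker, sub_zero, zero_add]
    rfl
  have e6 : imAxisRayInt (fun z => φ₀ z * ker x z) 1 =
      I * ∫ t in Set.Ioi (1 : ℝ), φ₀ (t * I) * Complex.exp (Real.pi * I * r * (t * I)) := by
    simp only [imAxisRayInt, hker]
    rw [integral_mul_const, mul_comm]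
  rw [funA, e1, e2, e3, e4, e5, e6]
  ring

/-- The contour identity at finite height `T`: the vertical sides of the rectangles combine,
by the second difference identity, into `2φ₀`, which cancels part of the last contour. -/
lemma funA_truncated (x : EuclideanSpace ℝ (Fin 8)) (r : ℝ) (hr : r = ‖x‖ ^ 2) {T : ℝ}
    (hT : 1 ≤ T) :
    funA x = (Complex.exp (-(Real.pi * I * r)) + Complex.exp (Real.pi * I * r) - 2) *
        (I * ∫ t in (0 : ℝ)..T, G r (t * I)) +
      (Complex.exp (-(Real.pi * I * r)) * (∫ s in (0 : ℝ)..1, G r (s + T * I)) +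
        Complex.exp (Real.pi * I * r) * ∫ s in (0 : ℝ)..(-1), G r (s + T * I)) +
      2 * I * ((∫ t in Set.Ioi (1 : ℝ), φ₀ (t * I) * Complex.exp (Real.pi * I * r * (t * I))) -
        ∫ t in (1 : ℝ)..T, φ₀ (t * I) * Complex.exp (Real.pi * I * r * (t * I))) := by
  have hsub : Set.uIcc 1 T ⊆ Set.Ioi 0 := by
    rw [Set.uIcc_of_le hT]; exact fun t ht => zero_lt_one.trans_le ht.1
  have hi (s : ℝ) : IntervalIntegrable (fun t : ℝ => G r (s + t * I)) volume 1 T :=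
    ((continuousOn_line (G_holo r) s).mono hsub).intervalIntegrable
  have hi0 : IntervalIntegrable (fun t : ℝ => G r (t * I)) volume 1 T :=
    ((continuousOn_vert (G_holo r)).mono hsub).intervalIntegrable
  have hV := intervalIntegral.integral_add_adjacent_intervals
    (intervalIntegrable_G r zero_le_one) hi0
  have h2 : Complex.exp (-(Real.pi * I * r)) * (∫ t in (1 : ℝ)..T, G r ((1 : ℝ) + t * I)) +
      Complex.exp (Real.pi * I * r) * (∫ t in (1 : ℝ)..T, G r ((-1 : ℝ) + t * I)) -
      2 * (∫ t in (1 : ℝ)..T, G r (t * I)) =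
      2 * ∫ t in (1 : ℝ)..T, φ₀ (t * I) * Complex.exp (Real.pi * I * r * (t * I)) := by
    simp only [← intervalIntegral.integral_const_mul]
    rw [← intervalIntegral.integral_add ((hi 1).const_mul _) ((hi (-1)).const_mul _),
      ← intervalIntegral.integral_sub (((hi 1).const_mul _).add ((hi (-1)).const_mul _))
        (hi0.const_mul _)]
    refine intervalIntegral.integral_congr fun t ht => ?_
    have := G_second_diff r (z := t * I) (by simpa using hsub ht)
    push_cast
    exact this
  rw [funA_eq x r hr, cauchy_G r 1 hT, cauchy_G r (-1) hT, ← hV]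
  linear_combination (-I) * h2

lemma exp_add_exp_sub_two (r : ℝ) :
    Complex.exp (-(Real.pi * I * r)) + Complex.exp (Real.pi * I * r) - 2 =
      -4 * (Real.sin (Real.pi * r / 2) : ℂ) ^ 2 := by
  have h := Complex.two_cos (Real.pi * r)
  have h' : Complex.cos (Real.pi * r) = 1 - 2 * Complex.sin (Real.pi * r / 2) ^ 2 := by
    rw [show (Real.pi * r : ℂ) = 2 * (Real.pi * r / 2) by ring, Complex.cos_two_mul,
      Complex.cos_sq']
    ring_nf
  rw [show -(Real.pi * I * r : ℂ) = -(Real.pi * r) * I by ring,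
    show (Real.pi * I * r : ℂ) = (Real.pi * r) * I by ring]
  push_cast
  linear_combination -h + 2 * h'

lemma funA_repr_aux (x : EuclideanSpace ℝ (Fin 8)) (hx : 2 ≤ ‖x‖ ^ 2) :
    funA x = -4 * (Real.sin (Real.pi * ‖x‖ ^ 2 / 2) : ℂ) ^ 2 *
      imAxisRayInt (fun z => φ₀ (-1 / z) * z ^ 2 * ker x z) 0 := by
  obtain ⟨r, hr⟩ : ∃ r : ℝ, r = ‖x‖ ^ 2 := ⟨_, rfl⟩
  have e0 : imAxisRayInt (fun z => φ₀ (-1 / z) * z ^ 2 * ker x z) 0 =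
      I * ∫ t in Set.Ioi (0 : ℝ), G r (t * I) := by
    have hker (z : ℂ) : ker x z = Complex.exp (Real.pi * I * r * z) := by
      rw [_root_.ker, hr]; push_cast; rfl
    simp only [imAxisRayInt, hker]
    rw [integral_mul_const, mul_comm]
    rfl
  rw [e0, ← hr, ← exp_add_exp_sub_two]
  rw [← hr] at hx
  obtain ⟨c, hc, hc0⟩ := exists_tendsto_G hx
  have hφ := (intervalIntegral_tendsto_integral_Ioi 1 (integrableOn_φ₀ hx) tendsto_id).const_sub
    (∫ t in Set.Ioi (1 : ℝ), φ₀ (t * I) * Complex.exp (Real.pi * I * r * (t * I)))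
  rw [sub_self] at hφ
  have hH := ((tendsto_horizontal_integral hc (s := 1) (by simp)).const_mul
    (Complex.exp (-(Real.pi * I * r)))).add
    ((tendsto_horizontal_integral hc (s := -1) (by simp)).const_mul
    (Complex.exp (Real.pi * I * r)))
  -- At `r = 2` the ray integral diverges, but its coefficient is zero.
  have hV : Tendsto (fun T : ℝ =>
      (Complex.exp (-(Real.pi * I * r)) + Complex.exp (Real.pi * I * r) - 2) *
        (I * ∫ t in (0 : ℝ)..T, G r (t * I))) atTop
      (𝓝 ((Complex.exp (-(Real.pi * I * r)) + Complex.exp (Real.pi * I * r) - 2) *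
        (I * ∫ t in Set.Ioi (0 : ℝ), G r (t * I)))) := by
    rcases hx.eq_or_lt with h | h
    · have : Complex.exp (-(Real.pi * I * r)) + Complex.exp (Real.pi * I * r) - 2 = 0 := by
        rw [exp_add_exp_sub_two, ← h]; simp
      simp only [this, zero_mul]
      exact tendsto_const_nhds
    · exact ((intervalIntegral_tendsto_integral_Ioi 0 (integrableOn_G h)
        tendsto_id).const_mul I).const_mul _
  -- The two horizontal sides cancel in the limit: `c = 0` for `r > 2`, while for `r = 2` both
  -- exponential factors are `1`.
  have hcancel : Complex.exp (-(Real.pi * I * r)) * ((1 : ℝ) * c) +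
      Complex.exp (Real.pi * I * r) * ((-1 : ℝ) * c) = 0 := by
    rcases hx.eq_or_lt with h | h
    · have h1 : Complex.exp (Real.pi * I * r) = 1 := by
        rw [← h, ← Complex.exp_two_pi_mul_I]; push_cast; ring_nf
      rw [Complex.exp_neg, h1]
      simp
    · rw [hc0 h]; simp
  rw [hcancel] at hH
  have hlim := (hV.add hH).add (hφ.const_mul (2 * I))
  rw [add_zero, mul_zero, add_zero] at hlim
  refine tendsto_nhds_unique (tendsto_const_nhds.congr' ?_) hlim
  filter_upwards [eventually_ge_atTop 1] with T hT
  exact funA_truncated x r hr hT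

end

/-- For `‖x‖ ≥ √2`, the function `a` is `-4 sin²(π‖x‖²/2)` times the integral of
`φ₀(-1/z) z² e^{πi‖x‖²z}` along the positive imaginary axis; in particular `a` vanishes
(to order at least two) at every `x` with `‖x‖²` an even positive integer. -/
theorem funA_repr :
    (∀ x : EuclideanSpace ℝ (Fin 8), Real.sqrt 2 ≤ ‖x‖ →
      funA x = -4 * (Real.sin (Real.pi * ‖x‖ ^ 2 / 2) : ℂ) ^ 2 *
        imAxisRayInt (fun z => φ₀ (-1 / z) * z ^ 2 * ker x z) 0) ∧
    (∀ x : EuclideanSpace ℝ (Fin 8), ∀ n : ℕ, 0 < n → ‖x‖ ^ 2 = 2 * (n : ℝ) →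
      funA x = 0) := by
  refine ⟨fun x hx => funA_repr_aux x ?_, fun x n hn hx => ?_⟩
  · simpa using pow_le_pow_left₀ (Real.sqrt_nonneg 2) hx 2
  · have hn' : (1 : ℝ) ≤ n := by exact_mod_cast hn
    have hsin : Real.sin (Real.pi * ‖x‖ ^ 2 / 2) = 0 := by
      rw [hx, show Real.pi * (2 * (n : ℝ)) / 2 = n * Real.pi by ring, Real.sin_nat_mul_pi]
    rw [funA_repr_aux x (by linarith), hsin]
    simp
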